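/- (Soundness of the While Consequence rule) Let P, P', Q, γ be programs, B a predicate on states, and C the relation of the loop body. Assume pst(P') = pst(P) ∩ {s | B s}, pst(Q) = pst(P) ∩ {s | ¬ B s}, and the operational triple ⟨P'⟩ C ⟨γ;P⟩ holds. Then the operational triple ⟨P⟩ while B do C ⟨Q⟩ holds, where the relation of the while loop is ⋃ over n of ((test B ; C) iterated n times) ; test(¬B). -/

import Mathlib

def pst {σ : Type*} (R : σ → σ → Prop) : Set σ := {t | ∃ s, R s t}

def seqc {σ : Type*} (R S : σ → σ → Prop) : σ → σ → Prop :=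
  fun s t => ∃ u, R s u ∧ S u t

def triple {σ : Type*} (P C Q : σ → σ → Prop) : Prop :=
  pst (seqc P C) ⊆ pst Q

def test {σ : Type*} (B : σ → Prop) : σ → σ → Prop :=
  fun s t => s = t ∧ B s

def iter {σ : Type*} (R : σ → σ → Prop) : ℕ → (σ → σ → Prop)
  | 0 => fun s t => s = t
  | (n + 1) => seqc R (iter R n)

def whileRel {σ : Type*} (B : σ → Prop) (C : σ → σ → Prop) : σ → σ → Prop :=
  fun s t => ∃ n : ℕ, seqc (iter (seqc (test B) C) n) (test (fun s => ¬ B s)) s t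

/-! A triple sees its pre- and postcondition programs only through their sets of post-states, so
operational triples obey the rules of Hoare logic with `pst P` in the role of an assertion.
Prefixing `P` by `γ` can only shrink its set of post-states; hence `pst P` is a loop invariant. -/

section OperationalTriple

variable {σ : Type*} {P P' Q Q' R C D : σ → σ → Prop} {B : σ → Prop}

theorem mem_pst_seqc_iff {t : σ} : t ∈ pst (seqc R C) ↔ ∃ s ∈ pst R, C s t := by
  constructor
  · rintro ⟨r, s, hrs, hst⟩
    exact ⟨s, ⟨r, hrs⟩, hst⟩
  · rintro ⟨s, ⟨r, hrs⟩, hst⟩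
    exact ⟨r, s, hrs, hst⟩

theorem pst_seqc_subset_right (R C : σ → σ → Prop) : pst (seqc R C) ⊆ pst C :=
  fun _ ⟨_, s, _, hst⟩ => ⟨s, hst⟩

theorem pst_seqc_mono_left (h : pst P ⊆ pst R) : pst (seqc P C) ⊆ pst (seqc R C) := by
  intro t ht
  obtain ⟨s, hs, hst⟩ := mem_pst_seqc_iff.mp ht
  exact mem_pst_seqc_iff.mpr ⟨s, h hs, hst⟩

theorem pst_seqc_test (R : σ → σ → Prop) (B : σ → Prop) :
    pst (seqc R (test B)) = pst R ∩ {s | B s} := by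
  ext t
  rw [mem_pst_seqc_iff]
  constructor
  · rintro ⟨_, hs, rfl, hB⟩
    exact ⟨hs, hB⟩
  · rintro ⟨ht, hB⟩
    exact ⟨t, ht, rfl, hB⟩

theorem triple.consequence (h : triple P C Q) (hP : pst P' ⊆ pst P) (hQ : pst Q ⊆ pst Q') :
    triple P' C Q' :=
  (pst_seqc_mono_left hP).trans (h.trans hQ)

theorem triple_seqc_iff : triple P (seqc C D) Q ↔ triple (seqc P C) D Q := by
  have assoc : seqc (seqc P C) D = seqc P (seqc C D) := Relation.comp_assoc
  rw [triple, triple, assoc]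

theorem triple_seqc (hC : triple P C R) (hD : triple R D Q) : triple P (seqc C D) Q :=
  triple_seqc_iff.mpr (hD.consequence hC Set.Subset.rfl)

theorem triple_exists {ι : Sort*} {C : ι → σ → σ → Prop} (h : ∀ i, triple P (C i) Q) :
    triple P (fun s t => ∃ i, C i s t) Q := by
  rintro t ⟨r, s, hrs, i, hst⟩
  exact h i ⟨r, s, hrs, hst⟩

theorem triple_iter (h : triple P C P) (n : ℕ) : triple P (iter C n) P := by
  induction n with
  | zero =>
    rintro _ ⟨r, s, hrs, rfl⟩
    exact ⟨r, hrs⟩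
  | succ n ih => exact triple_seqc h ih

theorem triple_whileRel (h : triple (seqc P (test B)) C P) :
    triple P (whileRel B C) (seqc P (test fun s => ¬ B s)) := by
  have iterations (n : ℕ) : triple P (iter (seqc (test B) C) n) P :=
    triple_iter (triple_seqc_iff.mpr h) n
  have exit_test : triple P (test fun s => ¬ B s) (seqc P (test fun s => ¬ B s)) :=
    Set.Subset.rfl
  exact triple_exists fun n => triple_seqc (iterations n) exit_test

theorem while_consequence_sound_general (hP' : pst P ∩ {s | B s} ⊆ pst P')
    (hQ : pst P ∩ {s | ¬ B s} ⊆ pst Q) (h : triple P' C P) :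
    triple P (whileRel B C) Q := by
  rw [← pst_seqc_test] at hP' hQ
  have body : triple (seqc P (test B)) C P := h.consequence hP' Set.Subset.rfl
  exact (triple_whileRel body).consequence Set.Subset.rfl hQ

end OperationalTriple

theorem while_consequence_sound {σ : Type*} (P P' Q γ : σ → σ → Prop) (B : σ → Prop)
    (C : σ → σ → Prop)
    (hP' : pst P' = pst P ∩ {s | B s})
    (hQ : pst Q = pst P ∩ {s | ¬ B s})
    (h : triple P' C (seqc γ P)) :
    triple P (whileRel B C) Q :=
  while_consequence_sound_general hP'.ge hQ.ge
    (h.consequence Set.Subset.rfl (pst_seqc_subset_right γ P))
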